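/- If G is a non-cyclic finite group of order n, then 11·ψ(G) ≤ 7·ψ(C_n). -/

import Mathlib

/-- `psi G` is the sum of the orders of all elements of the finite group `G`. -/
noncomputable def psi (G : Type*) [Group G] [Fintype G] : ℕ := ∑ x : G, orderOf x

/-- `psiC n` is the sum of the orders of all elements of the cyclic group `C_n`. -/
noncomputable def psiC (n : ℕ) : ℕ := ∑ k ∈ Finset.range n, addOrderOf (k : ZMod n)

/-- The orders of the elements of a cyclic group of order `n` are the divisors `d` of `n`, each
attained `φ d` times. -/
theorem psi_eq_sum_divisors (G : Type*) [Group G] [Fintype G] [IsCyclic G] :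
    psi G = ∑ d ∈ (Fintype.card G).divisors, d * d.totient := by
  have h : ∀ x ∈ (Finset.univ : Finset G), orderOf x ∈ (Fintype.card G).divisors := fun x _ =>
    Nat.mem_divisors.2 ⟨orderOf_dvd_card, Fintype.card_ne_zero⟩
  rw [psi, ← Finset.sum_fiberwise_of_maps_to h]
  refine Finset.sum_congr rfl fun d hd => ?_
  rw [Finset.sum_congr rfl (fun x hx => (Finset.mem_filter.1 hx).2), Finset.sum_const,
    IsCyclic.card_orderOf_eq_totient (Nat.dvd_of_mem_divisors hd), smul_eq_mul, mul_comm]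

theorem psiC_eq_sum_divisors (n : ℕ) : psiC n = ∑ d ∈ n.divisors, d * d.totient := by
  rcases n with _ | n
  · simp [psiC]
  · have h := psi_eq_sum_divisors (Multiplicative (ZMod (n + 1)))
    rw [Fintype.card_multiplicative, ZMod.card] at h
    rw [← h, psiC, Finset.sum_range]
    let e : Fin (n + 1) ≃ Multiplicative (ZMod (n + 1)) := Multiplicative.ofAdd
    refine Fintype.sum_equiv e _ _ fun k => ?_
    have hk : ((k : ℕ) : ZMod (n + 1)) = k := Fin.cast_val_eq_self k
    rw [hk]
    exact (orderOf_ofAdd_eq_addOrderOf _).symm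

theorem psi_eq_psiC (G : Type*) [Group G] [Fintype G] [IsCyclic G] :
    psi G = psiC (Fintype.card G) := by
  rw [psi_eq_sum_divisors, psiC_eq_sum_divisors]

theorem psiC_mul {m n : ℕ} (h : m.Coprime n) : psiC (m * n) = psiC m * psiC n := by
  simp only [psiC_eq_sum_divisors]
  rw [Nat.divisors_mul, Finset.mul_def, Finset.sum_image h.mul_injOn_divisors, Finset.sum_mul_sum,
    Finset.sum_product]
  refine Finset.sum_congr rfl fun x hx => Finset.sum_congr rfl fun y hy => ?_
  rw [Nat.totient_mul ((h.coprime_dvd_left (Nat.dvd_of_mem_divisors hx)).coprime_dvd_right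
    (Nat.dvd_of_mem_divisors hy))]
  ring

theorem psiC_prime_pow {p : ℕ} (hp : p.Prime) (a : ℕ) :
    psiC (p ^ a) * (p + 1) = p ^ (2 * a + 1) + 1 := by
  rw [psiC_eq_sum_divisors, Nat.sum_divisors_prime_pow hp]
  induction a with
  | zero => simp
  | succ a ih =>
    rw [Finset.sum_range_succ, add_mul, ih, Nat.totient_prime_pow_succ hp]
    obtain ⟨q, rfl⟩ := Nat.exists_eq_add_of_le' hp.one_le
    simp only [Nat.add_sub_cancel]
    ring

theorem psiC_le_of_dvd {m n : ℕ} (hn : n ≠ 0) (h : m ∣ n) : psiC m ≤ psiC n := by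
  simp only [psiC_eq_sum_divisors]
  exact Finset.sum_le_sum_of_subset (Nat.divisors_subset_of_dvd hn h)

theorem psiC_prime_mul_ge {p : ℕ} (hp : p.Prime) {n : ℕ} (hn : n ≠ 0) :
    (p ^ 2 + 1) * psiC n ≤ psiC (p * n) + p * psiC n := by
  obtain ⟨a, m, hm, rfl⟩ := Nat.exists_eq_pow_mul_and_not_dvd hn p hp.ne_one
  have hc : ∀ b, (p ^ b).Coprime m := fun b =>
    ((Nat.Prime.coprime_iff_not_dvd hp).2 hm).pow_left b
  rw [← mul_assoc, ← pow_succ', psiC_mul (hc _), psiC_mul (hc _)]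
  have h1 := psiC_prime_pow hp a
  have h2 := psiC_prime_pow hp (a + 1)
  have h3 : (p ^ 2 + 1) * psiC (p ^ a) ≤ psiC (p ^ (a + 1)) + p * psiC (p ^ a) := by
    refine Nat.le_of_mul_le_mul_right (c := p + 1) ?_ (by lia)
    have e1 : (p ^ 2 + 1) * psiC (p ^ a) * (p + 1) = (p ^ 2 + 1) * (p ^ (2 * a + 1) + 1) := by
      rw [mul_assoc, h1]
    have e2 : (psiC (p ^ (a + 1)) + p * psiC (p ^ a)) * (p + 1) =
        p ^ (2 * (a + 1) + 1) + 1 + p * (p ^ (2 * a + 1) + 1) := by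
      rw [add_mul, mul_assoc, h1, h2]
    rw [e1, e2]
    have h4 : p ≤ p ^ (2 * a + 1) := Nat.le_self_pow (by lia) p
    have h5 : p ^ (2 * (a + 1) + 1) = p ^ 2 * p ^ (2 * a + 1) := by ring
    rw [h5]
    have h6 := hp.two_le
    generalize p ^ (2 * a + 1) = x at *
    nlinarith [Nat.mul_le_mul (Nat.sub_le_sub_right h6 1) h4, Nat.sub_add_cancel hp.one_le]
  calc _ = (p ^ 2 + 1) * psiC (p ^ a) * psiC m := by ring
    _ ≤ (psiC (p ^ (a + 1)) + p * psiC (p ^ a)) * psiC m := Nat.mul_le_mul_right _ h3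
    _ = _ := by ring

theorem three_mul_psiC_le {m n : ℕ} (hn : n ≠ 0) (h : m ∣ n) (hne : m ≠ n) :
    3 * psiC m ≤ psiC n := by
  obtain ⟨k, rfl⟩ := h
  have hk : k ≠ 1 := by rintro rfl; simp at hne
  obtain ⟨p, hp, l, rfl⟩ := Nat.exists_prime_and_dvd hk
  have hml : m * l ≠ 0 := by rintro h0; apply hn; rw [mul_left_comm, h0, mul_zero]
  have h1 := psiC_prime_mul_ge hp hml
  have h2 := psiC_le_of_dvd hml (dvd_mul_right m l)
  rw [mul_left_comm]
  obtain ⟨q, rfl⟩ := Nat.exists_eq_add_of_le hp.two_le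
  nlinarith [Nat.zero_le (q * psiC (m * l)), Nat.zero_le (q ^ 2 * psiC (m * l))]

theorem two_mul_sq_le_psiC_mul (N : ℕ) {n : ℕ} (hn : n ≠ 0)
    (h : ∀ p, p.Prime → p ∣ n → p ≤ N) (hN : 1 ≤ N) :
    2 * n ^ 2 ≤ psiC n * (N + 1) := by
  induction N, hN using Nat.le_induction generalizing n with
  | base =>
    have : n = 1 := by
      by_contra hne
      obtain ⟨p, hp, hpn⟩ := Nat.exists_prime_and_dvd hne
      exact absurd (h p hp hpn) (not_le.2 hp.one_lt)
    subst this
    simp [psiC_eq_sum_divisors]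
  | succ N hN ih =>
    by_cases hp : (N + 1).Prime
    · obtain ⟨a, m, hm, rfl⟩ := Nat.exists_eq_pow_mul_and_not_dvd hn (N + 1) hp.ne_one
      have hc : ((N + 1) ^ a).Coprime m :=
        ((Nat.Prime.coprime_iff_not_dvd hp).2 hm).pow_left a
      have h1 := psiC_prime_pow hp a
      have h2 := ih (n := m) (right_ne_zero_of_mul hn) fun p hp' hpm => by
        have := h p hp' (hpm.mul_left _)
        have : p ≠ N + 1 := by rintro rfl; exact hm hpm
        lia
      rw [psiC_mul hc]
      calc 2 * ((N + 1) ^ a * m) ^ 2 = ((N + 1) ^ a) ^ 2 * (2 * m ^ 2) := by ring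
        _ ≤ ((N + 1) ^ a) ^ 2 * (psiC m * (N + 1)) := Nat.mul_le_mul_left _ h2
        _ = (N + 1) ^ (2 * a + 1) * psiC m := by ring
        _ ≤ (psiC ((N + 1) ^ a) * (N + 1 + 1)) * psiC m :=
          Nat.mul_le_mul_right _ (by rw [h1]; lia)
        _ = _ := by ring
    · refine (ih hn fun p hp' hpn => ?_).trans (Nat.mul_le_mul_left _ (by lia))
      have := h p hp' hpn
      have : p ≠ N + 1 := by rintro rfl; exact hp hp'
      lia

theorem seven_mul_prime_pow_le {p a : ℕ} (hp : p.Prime) (hp3 : 3 ≤ p) (ha : a ≠ 0) :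
    7 * p ^ a ≤ 3 * psiC (p ^ a) := by
  have h1 := psiC_prime_pow hp a
  have h2 : p ≤ p ^ a := Nat.le_self_pow ha p
  have h3 : p ^ (2 * a + 1) = p * p ^ a * p ^ a := by ring
  rw [h3] at h1
  generalize psiC (p ^ a) = y at *
  generalize p ^ a = x at *
  refine Nat.le_of_mul_le_mul_right (c := p + 1) ?_ (by lia)
  rw [mul_assoc 3, h1]
  obtain ⟨u, rfl⟩ := Nat.exists_eq_add_of_le hp3
  obtain ⟨v, rfl⟩ := Nat.exists_eq_add_of_le (hp3.trans h2)
  nlinarith [Nat.zero_le (u * v), Nat.zero_le (u * v * v), Nat.zero_le (v * v)]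

theorem exists_conj_eq_zpow {G : Type*} [Group G] (P : Subgroup G) [P.Normal] [IsCyclic P]
    (g : G) : ∃ s : ℤ, ∀ h ∈ P, g * h * g⁻¹ = h ^ s := by
  obtain ⟨s, hs⟩ := MonoidHom.map_cyclic (MulAut.conjNormal (H := P) g).toMonoidHom
  refine ⟨s, fun h hh => ?_⟩
  simpa using congrArg Subtype.val (hs ⟨h, hh⟩)

theorem conj_pow_eq_zpow {G : Type*} [Group G] {g h : G} {s : ℤ}
    (hs : g * h * g⁻¹ = h ^ s) (k : ℕ) : g ^ k * h * (g ^ k)⁻¹ = h ^ (s ^ k) := by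
  induction k with
  | zero => simp
  | succ k ih =>
    calc g ^ (k + 1) * h * (g ^ (k + 1))⁻¹ = g * (g ^ k * h * (g ^ k)⁻¹) * g⁻¹ := by group
      _ = (g * h * g⁻¹) ^ (s ^ k) := by rw [ih, conj_zpow]
      _ = h ^ (s ^ (k + 1)) := by rw [hs, ← zpow_mul, pow_succ']

/-- Elements of the quotient by a normal Hall subgroup lift to elements of the same order. -/
theorem exists_mk_eq_orderOf_eq {G : Type*} [Group G] [Finite G] (P : Subgroup G) [P.Normal]
    (hP : (Nat.card P).Coprime P.index) (c : G ⧸ P) :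
    ∃ g : G, (g : G ⧸ P) = c ∧ orderOf g = orderOf c := by
  obtain ⟨y, rfl⟩ := QuotientGroup.mk_surjective c
  set d := orderOf (y : G ⧸ P) with hd
  have hdi : d ∣ P.index := by rw [Subgroup.index_eq_card]; exact orderOf_dvd_natCard _
  have hc : (Nat.card P).Coprime d := hP.coprime_dvd_right hdi
  obtain ⟨k, hk0, hk1⟩ := Nat.chineseRemainder hc 0 1
  have hmk : ((y ^ k : G) : G ⧸ P) = y := by
    rw [QuotientGroup.mk_pow]
    simpa using (pow_eq_pow_iff_modEq (x := (y : G ⧸ P))).2 hk1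
  refine ⟨y ^ k, hmk, Nat.dvd_antisymm ?_ ?_⟩
  · obtain ⟨l, rfl⟩ := (Nat.modEq_zero_iff_dvd).1 hk0
    have hyd : y ^ d ∈ P := by
      rw [← QuotientGroup.eq_one_iff, QuotientGroup.mk_pow, pow_orderOf_eq_one]
    apply orderOf_dvd_of_pow_eq_one
    have h1 : (y ^ d) ^ Nat.card P = 1 := by
      have := pow_card_eq_one' (x := (⟨y ^ d, hyd⟩ : P))
      exact congrArg Subtype.val this
    rw [← pow_mul, show Nat.card P * l * d = d * Nat.card P * l by ring, pow_mul, pow_mul, h1,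
      one_pow]
  · conv_lhs => rw [hd, ← hmk]
    exact orderOf_map_dvd (QuotientGroup.mk' P) _

theorem orderOf_mul_dvd_of_mem_cyclic_normal {G : Type*} [Group G] (P : Subgroup G) [P.Normal]
    [IsCyclic P] (g : G) {h : G} (hh : h ∈ P) : orderOf (g * h) ∣ orderOf g * orderOf h := by
  have hn : (Subgroup.zpowers h).Normal := by
    refine ⟨fun x hx y => ?_⟩
    obtain ⟨k, rfl⟩ := Subgroup.mem_zpowers_iff.1 hx
    obtain ⟨s, hs⟩ := exists_conj_eq_zpow P y
    rw [← conj_zpow, hs h hh, ← zpow_mul]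
    exact Subgroup.zpow_mem_zpowers h _
  have h1 : (g * h) ^ orderOf g ∈ Subgroup.zpowers h := by
    rw [← QuotientGroup.eq_one_iff, QuotientGroup.mk_pow, QuotientGroup.mk_mul,
      (QuotientGroup.eq_one_iff h).2 (Subgroup.mem_zpowers h), mul_one, ← QuotientGroup.mk_pow,
      pow_orderOf_eq_one, QuotientGroup.mk_one]
  apply orderOf_dvd_of_pow_eq_one
  obtain ⟨k, hk⟩ := Subgroup.mem_zpowers_iff.1 h1
  rw [pow_mul, ← hk, ← zpow_natCast, ← zpow_mul, mul_comm, zpow_mul, zpow_natCast,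
    pow_orderOf_eq_one, one_zpow]

theorem sum_orderOf_fiber_le {G : Type*} [Group G] [Fintype G] (P : Subgroup G) [P.Normal]
    [IsCyclic P] [DecidableEq (G ⧸ P)] [Fintype P] (hP : (Nat.card P).Coprime P.index)
    (c : G ⧸ P) :
    ∑ y : G with (QuotientGroup.mk y : G ⧸ P) = c, orderOf y ≤ orderOf c * psi P := by
  obtain ⟨g, rfl, hg⟩ := exists_mk_eq_orderOf_eq P hP c
  rw [← hg, psi, Finset.mul_sum]
  have : ∑ y : G with (QuotientGroup.mk y : G ⧸ P) = g, orderOf y = ∑ h : P, orderOf (g * (h : G)) := by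
    symm
    refine Finset.sum_bij (fun h _ => g * (h : G)) ?_ ?_ ?_ ?_
    · intro h _
      simp
    · intro a _ b _ hab
      exact Subtype.ext (mul_left_cancel hab)
    · intro y hy
      have hy' : (g : G ⧸ P) = y := (Finset.mem_filter.1 hy).2.symm
      exact ⟨⟨g⁻¹ * y, QuotientGroup.eq.1 hy'⟩, Finset.mem_univ _, by simp⟩
    · intros; rfl
  rw [this]
  refine Finset.sum_le_sum fun h _ => ?_
  rw [← Subgroup.orderOf_coe h]
  exact Nat.le_of_dvd (Nat.mul_pos (orderOf_pos _) (orderOf_pos _))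
    (orderOf_mul_dvd_of_mem_cyclic_normal P g h.2)

/-- A `p'`-element acting nontrivially on a normal cyclic `p`-subgroup `P` is conjugate to all the
elements of its coset modulo `P`. -/
theorem orderOf_eq_of_mk_eq {G : Type*} [Group G] [Finite G] (P : Subgroup G) [P.Normal]
    [IsCyclic P] {p a : ℕ} (hp : p.Prime) (ha : Nat.card P = p ^ a) {g y : G}
    (hg : (orderOf g).Coprime p) (hgP : g ∉ Subgroup.centralizer (P : Set G))
    (hy : (y : G ⧸ P) = g) : orderOf y = orderOf g := by
  obtain ⟨s, hs⟩ := exists_conj_eq_zpow P g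
  have hpow : ∀ h ∈ P, ∀ k : ℤ, (p ^ a : ℤ) ∣ k → h ^ k = 1 := by
    rintro h hh _ ⟨k, rfl⟩
    have h1 : h ^ (p ^ a) = 1 := by
      have := pow_card_eq_one' (x := (⟨h, hh⟩ : P))
      rw [ha] at this
      exact congrArg Subtype.val this
    rw [zpow_mul, ← Nat.cast_pow, zpow_natCast, h1, one_zpow]
  have hps : ¬ (p : ℤ) ∣ 1 - s := by
    intro hdvd
    apply hgP
    rw [Subgroup.mem_centralizer_iff]
    intro h hh
    have h1 := dvd_sub_pow_of_dvd_sub hdvd a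
    rw [one_pow] at h1
    have h2 := conj_pow_eq_zpow (hs h hh) (p ^ a)
    have h3 : h ^ (s ^ p ^ a) = h := by
      have := hpow h hh _ ((pow_dvd_pow _ (Nat.le_succ a)).trans h1)
      rw [zpow_sub, zpow_one, mul_inv_eq_one] at this
      exact this.symm
    rw [h3, mul_inv_eq_iff_eq_mul] at h2
    have hcom : Commute h (g ^ p ^ a) := h2.symm
    obtain ⟨m, hm⟩ := exists_pow_eq_self_of_coprime (hg.pow_right a).symm
    have := hcom.pow_right m
    rw [hm] at this
    exact this
  have hcop : IsCoprime (1 - s) ((p : ℤ) ^ a) := by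
    apply IsCoprime.pow_right
    exact ((Nat.prime_iff_prime_int.1 hp).coprime_iff_not_dvd.2 hps).symm
  obtain ⟨j, i, hij⟩ := hcop
  have hu : y * g⁻¹ ∈ P := by
    rw [← QuotientGroup.eq_one_iff, QuotientGroup.mk_mul, hy, QuotientGroup.mk_inv,
      mul_inv_cancel]
  set u := y * g⁻¹ with hu'
  have hku : (u ^ j) * (u ^ j) ^ (-s) = u := by
    rw [← zpow_mul, ← zpow_add]
    have h1 : j + j * -s = 1 - i * (p : ℤ) ^ a := by linear_combination hij
    rw [h1, zpow_sub, hpow u hu _ (dvd_mul_left _ _)]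
    simp
  have hconj : y = u ^ j * g * (u ^ j)⁻¹ := by
    have h1 := hs (u ^ j) (P.zpow_mem hu j)
    calc y = u * g := by simp [hu']
      _ = u ^ j * (u ^ j) ^ (-s) * g := by rw [hku]
      _ = u ^ j * (g * u ^ j * g⁻¹)⁻¹ * g := by rw [h1, zpow_neg]
      _ = _ := by group
  rw [hconj]
  exact orderOf_injective (MulAut.conj (u ^ j)).toMonoidHom (MulAut.conj (u ^ j)).injective g

theorem isCyclic_of_le_map_centralizer {G : Type*} [Group G] [Finite G] (P : Subgroup G)
    [P.Normal] [IsCyclic P] [IsCyclic (G ⧸ P)] (hP : (Nat.card P).Coprime P.index)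
    (h : (Subgroup.centralizer (P : Set G)).map (QuotientGroup.mk' P) = ⊤) : IsCyclic G := by
  obtain ⟨c, hc⟩ := IsCyclic.exists_ofOrder_eq_natCard (α := G ⧸ P)
  obtain ⟨z, hz⟩ := IsCyclic.exists_ofOrder_eq_natCard (α := P)
  obtain ⟨g, rfl, hg⟩ := exists_mk_eq_orderOf_eq P hP c
  have hgt : (g : G ⧸ P) ∈ (⊤ : Subgroup (G ⧸ P)) := trivial
  rw [← h] at hgt
  obtain ⟨x, hx, hxg⟩ := hgt
  have hu : x⁻¹ * g ∈ P := QuotientGroup.eq.1 hxg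
  have hcom : Commute g (z : G) := by
    have h1 : Commute x (z : G) := (Subgroup.mem_centralizer_iff.1 hx z z.2).symm
    have h2 : Commute (x⁻¹ * g) (z : G) := by
      let _ : CommGroup P := IsCyclic.commGroup
      exact congrArg Subtype.val (mul_comm (⟨x⁻¹ * g, hu⟩ : P) z)
    simpa using h1.mul_left h2
  rw [← Subgroup.orderOf_coe] at hz
  rw [← hg, ← Subgroup.index_eq_card] at hc
  refine isCyclic_of_orderOf_eq_card (g * z) ?_
  rw [hcom.orderOf_mul_eq_mul_orderOf_of_coprime (by rw [hz, hc]; exact hP.symm), hz, hc,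
    mul_comm, Subgroup.card_mul_index]

theorem psi_eq_sum_fiber {G : Type*} [Group G] [Fintype G] (P : Subgroup G) [P.Normal]
    [Fintype (G ⧸ P)] [DecidableEq (G ⧸ P)] :
    psi G = ∑ c : G ⧸ P, ∑ y : G with (QuotientGroup.mk y : G ⧸ P) = c, orderOf y :=
  (Finset.sum_fiberwise _ _ _).symm

theorem psi_le_mul_psi_quotient {G : Type*} [Group G] [Fintype G] (P : Subgroup G) [P.Normal]
    [IsCyclic P] [Fintype (G ⧸ P)] [Fintype P] (hP : (Nat.card P).Coprime P.index) :
    psi G ≤ psi P * psi (G ⧸ P) := by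
  classical
  rw [psi_eq_sum_fiber P, psi.eq_1 (G ⧸ P), Finset.mul_sum]
  refine Finset.sum_le_sum fun c _ => (sum_orderOf_fiber_le P hP c).trans_eq (mul_comm _ _)

theorem psi_le_of_isCyclic_quotient {G : Type*} [Group G] [Fintype G] (hG : ¬ IsCyclic G)
    (P : Subgroup G) [P.Normal] [IsCyclic P] [IsCyclic (G ⧸ P)] {p a : ℕ} (hp : p.Prime)
    (hp3 : 3 ≤ p) (ha0 : a ≠ 0) (ha : Nat.card P = p ^ a)
    (hP : (Nat.card P).Coprime P.index) :
    11 * psi G ≤ 7 * (psiC (Nat.card P) * psiC P.index) := by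
  classical
  have := Fintype.ofFinite (G ⧸ P)
  have := Fintype.ofFinite P
  set Z := (Subgroup.centralizer (P : Set G)).map (QuotientGroup.mk' P) with hZ
  have hZt : Z ≠ ⊤ := fun h => hG (isCyclic_of_le_map_centralizer P hP h)
  have hA : psi P = psiC (Nat.card P) := by rw [psi_eq_psiC, Nat.card_eq_fintype_card]
  have hB : psi (G ⧸ P) = psiC P.index := by
    rw [psi_eq_psiC, Subgroup.index_eq_card, Nat.card_eq_fintype_card]
  have hT : 3 * psi Z ≤ psiC P.index := by
    rw [psi_eq_psiC, ← Nat.card_eq_fintype_card, Subgroup.index_eq_card]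
    exact three_mul_psiC_le Nat.card_pos.ne' (Subgroup.card_subgroup_dvd_card Z)
      fun h => hZt (Subgroup.eq_top_of_card_eq Z h)
  have hZsum : ∑ c : G ⧸ P with c ∈ Z, orderOf c = psi Z := by
    rw [psi, Finset.sum_subtype _ (p := fun c => c ∈ Z) (by simp)]
    exact Finset.sum_congr rfl fun c _ => Subgroup.orderOf_coe c
  have hsplit : psi Z + ∑ c : G ⧸ P with c ∉ Z, orderOf c = psi (G ⧸ P) := by
    rw [← hZsum, Finset.sum_filter_add_sum_filter_not, psi]
  have hin : ∑ c : G ⧸ P with c ∈ Z, ∑ y : G with (QuotientGroup.mk y : G ⧸ P) = c, orderOf y ≤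
      psi Z * psi P := by
    rw [← hZsum, Finset.sum_mul]
    exact Finset.sum_le_sum fun c _ => sum_orderOf_fiber_le P hP c
  have hout : ∑ c : G ⧸ P with c ∉ Z, ∑ y : G with (QuotientGroup.mk y : G ⧸ P) = c, orderOf y ≤
      (∑ c : G ⧸ P with c ∉ Z, orderOf c) * p ^ a := by
    rw [Finset.sum_mul]
    refine Finset.sum_le_sum fun c hc => ?_
    have hc' : c ∉ Z := (Finset.mem_filter.1 hc).2
    obtain ⟨g, rfl, hg⟩ := exists_mk_eq_orderOf_eq P hP c
    have hgp : (orderOf g).Coprime p := by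
      rw [hg]
      rw [ha] at hP
      refine (Nat.Coprime.coprime_dvd_left ?_ hP.symm).coprime_dvd_right (dvd_pow_self p ha0)
      rw [Subgroup.index_eq_card]
      exact orderOf_dvd_natCard _
    have hgZ : g ∉ Subgroup.centralizer (P : Set G) := fun h => hc' ⟨g, h, rfl⟩
    rw [Finset.sum_congr rfl fun y hy =>
      orderOf_eq_of_mk_eq P hp ha hgp hgZ (Finset.mem_filter.1 hy).2, Finset.sum_const,
      smul_eq_mul, mul_comm, hg]
    refine Nat.mul_le_mul_left _ ?_
    rw [← ha, Nat.card_eq_fintype_card, ← Finset.card_univ]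
    refine Finset.card_le_card_of_surjOn (fun h : P => g * (h : G)) fun y hy => ?_
    have hy' : (g : G ⧸ P) = y := (Finset.mem_filter.1 hy).2.symm
    exact ⟨⟨g⁻¹ * y, QuotientGroup.eq.1 hy'⟩, by simp, by simp⟩
  have htot : psi G ≤ psi Z * psi P + (∑ c : G ⧸ P with c ∉ Z, orderOf c) * p ^ a := by
    rw [psi_eq_sum_fiber P, ← Finset.sum_filter_add_sum_filter_not _ (fun c => c ∈ Z)]
    exact add_le_add hin hout
  have hu := seven_mul_prime_pow_le hp hp3 ha0
  rw [← ha, ← hA] at hu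
  rw [← ha] at htot
  rw [← hA, ← hB]
  rw [← hB] at hT
  generalize ∑ c : G ⧸ P with c ∉ Z, orderOf c = r at *
  generalize psi (G ⧸ P) = b at *
  generalize psi P = x at *
  generalize psi Z = t at *
  generalize Nat.card P = q at *
  subst hsplit
  nlinarith [Nat.mul_le_mul_left r hu, Nat.mul_le_mul_right x hT]

theorem exists_orderOf_max {G : Type*} [Group G] [Fintype G] :
    ∃ x : G, psi G ≤ Fintype.card G * orderOf x ∧ ∀ y : G, orderOf y ≤ orderOf x := by
  obtain ⟨x, -, hx⟩ := Finset.exists_max_image (Finset.univ : Finset G) orderOf ⟨1, by simp⟩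
  refine ⟨x, ?_, fun y => hx y (by simp)⟩
  simpa [psi] using Finset.sum_le_card_nsmul Finset.univ _ _ hx

theorem psi_le_of_orderOf_le {G : Type*} [Group G] [Fintype G] {x : G}
    (hx : ∀ y : G, orderOf y ≤ orderOf x) :
    psi G + orderOf x * orderOf x ≤ psiC (orderOf x) + Fintype.card G * orderOf x := by
  classical
  set H := Subgroup.zpowers x with hH
  have hc : Fintype.card H = orderOf x := Fintype.card_zpowers
  have hHsum : ∑ y : G with y ∈ H, orderOf y = psiC (orderOf x) := by
    rw [← hc, ← psi_eq_psiC, psi, Finset.sum_subtype _ (p := fun c => c ∈ H) (by simp)]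
    exact Finset.sum_congr rfl fun c _ => Subgroup.orderOf_coe c
  have hcard : (Finset.univ.filter fun y : G => y ∈ H).card = orderOf x := by
    rw [← hc, Fintype.card_subtype]
  have hcard' := Finset.card_filter_add_card_filter_not (s := (Finset.univ : Finset G))
    (fun y : G => y ∈ H)
  have hout : ∑ y : G with y ∉ H, orderOf y ≤
      (Finset.univ.filter fun y : G => y ∉ H).card * orderOf x := by
    simpa using Finset.sum_le_card_nsmul _ _ _ fun y _ => hx y
  rw [psi, ← Finset.sum_filter_add_sum_filter_not _ (fun y => y ∈ H), hHsum,
    ← Finset.card_univ, ← hcard', hcard, add_mul]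
  lia

/-- A Sylow subgroup contained in an abelian subgroup of index less than `p` is normal. -/
theorem exists_normal_cyclic_sylow {G : Type*} [Group G] [Finite G] {p : ℕ} [Fact p.Prime]
    (x : G) (hx : (Subgroup.zpowers x).index < p) :
    ∃ P : Sylow p G, (P : Subgroup G).Normal ∧ IsCyclic P := by
  set H := Subgroup.zpowers x with hH
  have hHp : ¬ p ∣ H.index := fun h =>
    absurd (Nat.le_of_dvd (Nat.pos_of_ne_zero H.index_ne_zero_of_finite) h) (not_le.2 hx)
  obtain ⟨Q⟩ : Nonempty (Sylow p H) := inferInstance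
  have hQi : ((Q : Subgroup H).map H.subtype).index = (Q : Subgroup H).index * H.index := by
    rw [Subgroup.index_map_subtype]
  have hQp : ¬ p ∣ ((Q : Subgroup H).map H.subtype).index := by
    rw [hQi, (Fact.out : p.Prime).dvd_mul]
    exact not_or.2 ⟨Q.not_dvd_index, hHp⟩
  set P : Sylow p G := (Q.2.map H.subtype).toSylow hQp with hP
  have hPH : (P : Subgroup G) ≤ H := by
    rw [hP, IsPGroup.toSylow_coe]
    exact Subgroup.map_subtype_le _
  refine ⟨P, ?_, Subgroup.isCyclic_of_le hPH⟩
  have hHN : H ≤ Subgroup.normalizer ((P : Subgroup G) : Set G) := by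
    refine le_trans ?_ (Subgroup.centralizer_le_normalizer _)
    intro y hy
    rw [Subgroup.mem_centralizer_iff]
    intro h hh
    let _ : CommGroup H := IsCyclic.commGroup
    exact congrArg Subtype.val (mul_comm (⟨h, hPH hh⟩ : H) ⟨y, hy⟩)
  have h1 := P.card_eq_index_normalizer
  have h2 : Nat.card (Sylow p G) < p := by
    rw [h1]
    exact (Nat.le_of_dvd (Nat.pos_of_ne_zero H.index_ne_zero_of_finite)
      (Subgroup.index_dvd_of_le hHN)).trans_lt hx
  have h3 : Nat.card (Sylow p G) = 1 :=
    Nat.ModEq.eq_of_lt_of_lt (card_sylow_modEq_one p G) h2 (Fact.out : p.Prime).one_lt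
  rw [h1, Subgroup.index_eq_one] at h3
  exact Subgroup.normalizer_eq_top_iff.1 h3

theorem psi_le_of_normal_sylow {G : Type*} [Group G] [Fintype G] (hG : ¬ IsCyclic G) {p : ℕ}
    [Fact p.Prime] (hp3 : 3 ≤ p) (hpn : p ∣ Fintype.card G) (P : Sylow p G)
    [hPn : (P : Subgroup G).Normal] [IsCyclic P]
    (ih : ¬ IsCyclic (G ⧸ (P : Subgroup G)) → ∀ [Fintype (G ⧸ (P : Subgroup G))],
      11 * psi (G ⧸ (P : Subgroup G)) ≤ 7 * psiC (Fintype.card (G ⧸ (P : Subgroup G)))) :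
    11 * psi G ≤ 7 * psiC (Fintype.card G) := by
  classical
  have hp : p.Prime := Fact.out
  have := Fintype.ofFinite (G ⧸ (P : Subgroup G))
  have := Fintype.ofFinite P
  have hcop : (Nat.card P).Coprime (P : Subgroup G).index := P.card_coprime_index
  obtain ⟨a, ha⟩ := IsPGroup.iff_card.1 P.2
  have ha0 : a ≠ 0 := by
    rintro rfl
    have h1 := P.dvd_card_of_dvd_card (by rwa [Nat.card_eq_fintype_card])
    rw [ha, pow_zero] at h1
    exact hp.one_lt.ne' (Nat.dvd_one.1 h1)
  have hn : Fintype.card G = Nat.card P * (P : Subgroup G).index := by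
    rw [← Nat.card_eq_fintype_card]
    exact (Subgroup.card_mul_index _).symm
  rw [hn, psiC_mul hcop]
  by_cases hQ : IsCyclic (G ⧸ (P : Subgroup G))
  · exact psi_le_of_isCyclic_quotient hG (P : Subgroup G) hp hp3 ha0 ha hcop
  · have h1 := ih hQ
    have h2 := psi_le_mul_psi_quotient (P : Subgroup G) hcop
    have h3 : psi P = psiC (Nat.card P) := by rw [psi_eq_psiC, Nat.card_eq_fintype_card]
    rw [← Nat.card_eq_fintype_card, ← Subgroup.index_eq_card] at h1
    calc 11 * psi G ≤ 11 * (psi P * psi (G ⧸ (P : Subgroup G))) := Nat.mul_le_mul_left _ h2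
      _ = psi P * (11 * psi (G ⧸ (P : Subgroup G))) := by ring
      _ ≤ psi P * (7 * psiC (P : Subgroup G).index) := Nat.mul_le_mul_left _ h1
      _ = _ := by rw [h3]; ring

theorem psi_le_of_two_group {G : Type*} [Group G] [Fintype G] {a : ℕ}
    (hcard : Fintype.card G = 2 ^ a) (hG : ¬ IsCyclic G) {x : G}
    (hx : ∀ y : G, orderOf y ≤ orderOf x) (hx2 : orderOf x * 2 = 2 ^ a) :
    11 * psi G ≤ 7 * psiC (2 ^ a) := by
  have ha : 2 ≤ a := by
    by_contra! h
    apply hG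
    interval_cases a
    · exact absurd hx2 (by lia)
    · have := Fact.mk Nat.prime_two
      exact isCyclic_of_prime_card (p := 2) (by rw [Nat.card_eq_fintype_card, hcard]; rfl)
  obtain ⟨b, rfl⟩ := Nat.exists_eq_add_of_le' ha
  have ho : orderOf x = 2 ^ (b + 1) := by
    rw [show b + 2 = (b + 1) + 1 by rfl, pow_succ] at hx2
    lia
  have h1 := psi_le_of_orderOf_le hx
  rw [hcard, ho] at h1
  have h2 := psiC_prime_pow Nat.prime_two (b + 1)
  have h3 := psiC_prime_pow Nat.prime_two (b + 2)
  have e1 : 2 ^ (2 * (b + 1) + 1) = 8 * (2 ^ b * 2 ^ b) := by ring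
  have e2 : 2 ^ (2 * (b + 2) + 1) = 32 * (2 ^ b * 2 ^ b) := by ring
  have e3 : 2 ^ (b + 1) * 2 ^ (b + 1) = 4 * (2 ^ b * 2 ^ b) := by ring
  have e4 : 2 ^ (b + 2) * 2 ^ (b + 1) = 8 * (2 ^ b * 2 ^ b) := by ring
  have h4 : 0 < 2 ^ b * 2 ^ b := by positivity
  rw [e1] at h2
  rw [e2] at h3
  rw [e3, e4] at h1
  lia

theorem psi_le_of_index_three {G : Type*} [Group G] [Fintype G]
    (hcard : ∀ q, q.Prime → q ∣ Fintype.card G → q ≤ 3) {x : G}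
    (hx : ∀ y : G, orderOf y ≤ orderOf x) (hx3 : orderOf x * 3 = Fintype.card G) :
    11 * psi G ≤ 7 * psiC (Fintype.card G) := by
  have h1 := psi_le_of_orderOf_le hx
  have h2 := two_mul_sq_le_psiC_mul 3 Fintype.card_ne_zero hcard (by norm_num)
  have h3 := psiC_prime_mul_ge Nat.prime_three (orderOf_pos x).ne'
  rw [mul_comm 3 (orderOf x)] at h3
  rw [← hx3] at h1 h2 ⊢
  generalize psiC (orderOf x * 3) = y at *
  generalize psiC (orderOf x) = z at *
  generalize orderOf x = k at *
  nlinarith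

theorem eleven_mul_psi_le {G : Type*} [Group G] [Fintype G] (hG : ¬ IsCyclic G) :
    11 * psi G ≤ 7 * psiC (Fintype.card G) := by
  induction hcn : Fintype.card G using Nat.strong_induction_on generalizing G with
  | _ n ih =>
    subst hcn
    by_contra! hlt
    obtain ⟨x, hx1, hx⟩ := exists_orderOf_max (G := G)
    set k := (Subgroup.zpowers x).index with hk
    have hxk : orderOf x * k = Fintype.card G := by
      rw [← Nat.card_zpowers, Subgroup.card_mul_index, Nat.card_eq_fintype_card]
    have hk1 : k ≠ 1 := by
      intro h
      rw [h, mul_one] at hxk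
      exact hG (isCyclic_of_orderOf_eq_card x (by rw [hxk, Nat.card_eq_fintype_card]))
    have hk0 : k ≠ 0 := Subgroup.index_ne_zero_of_finite
    have hn1 : Fintype.card G ≠ 1 := fun h => by
      rw [h] at hxk
      exact hk1 (Nat.eq_one_of_mul_eq_one_left hxk)
    have hne : (Fintype.card G).primeFactors.Nonempty := by
      rw [Nat.nonempty_primeFactors]
      have := Fintype.card_pos (α := G)
      lia
    obtain ⟨p, hpm, hmax⟩ := Finset.exists_max_image _ id hne
    have hp := Nat.prime_of_mem_primeFactors hpm
    have hpn := Nat.dvd_of_mem_primeFactors hpm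
    have hmax' : ∀ q, q.Prime → q ∣ Fintype.card G → q ≤ p := fun q hq hqn =>
      hmax q (Nat.mem_primeFactors.2 ⟨hq, hqn, Fintype.card_ne_zero⟩)
    have hbound := two_mul_sq_le_psiC_mul p Fintype.card_ne_zero hmax' hp.one_le
    have hkp : 14 * k < 11 * (p + 1) := by
      have hpos : 0 < orderOf x := orderOf_pos x
      by_contra! hcon
      have h1 : 11 * (Fintype.card G * orderOf x) * (p + 1) ≤ 14 * Fintype.card G ^ 2 := by
        calc 11 * (Fintype.card G * orderOf x) * (p + 1)
            = Fintype.card G * orderOf x * (11 * (p + 1)) := by ring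
          _ ≤ Fintype.card G * orderOf x * (14 * k) := Nat.mul_le_mul_left _ hcon
          _ = 14 * (Fintype.card G * (orderOf x * k)) := by ring
          _ = _ := by rw [hxk]; ring
      have h2 : 7 * psiC (Fintype.card G) * (p + 1) < 7 * psiC (Fintype.card G) * (p + 1) := by
        calc _ < 11 * psi G * (p + 1) := Nat.mul_lt_mul_of_pos_right hlt (by lia)
          _ ≤ 11 * (Fintype.card G * orderOf x) * (p + 1) := by gcongr
          _ ≤ 14 * Fintype.card G ^ 2 := h1
          _ ≤ _ := by linarith
      exact lt_irrefl _ h2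
    have := Fact.mk hp
    by_cases hcase : 3 ≤ p ∧ k < p
    · obtain ⟨P, hPn, hPc⟩ := exists_normal_cyclic_sylow x hcase.2
      refine hlt.not_ge (psi_le_of_normal_sylow hG hcase.1 hpn P fun hQ _ => ?_)
      refine ih _ ?_ hQ rfl
      rw [← Nat.card_eq_fintype_card, ← Nat.card_eq_fintype_card]
      rw [← Subgroup.card_mul_index (P : Subgroup G), Subgroup.index_eq_card]
      have h1 := P.dvd_card_of_dvd_card (by rwa [Nat.card_eq_fintype_card])
      have h2 : 1 < Nat.card P := hp.one_lt.trans_le (Nat.le_of_dvd Nat.card_pos h1)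
      exact lt_mul_of_one_lt_left Nat.card_pos h2
    · have hp2 := hp.two_le
      obtain ⟨rfl, hk2⟩ | ⟨rfl, hk3⟩ : p = 2 ∧ k = 2 ∨ p = 3 ∧ k = 3 := by lia
      · obtain ⟨a, ha⟩ : ∃ a, Fintype.card G = 2 ^ a :=
          ⟨_, Nat.eq_prime_pow_of_unique_prime_dvd Fintype.card_ne_zero fun {q} hq hqn =>
            le_antisymm (hmax' q hq hqn) hq.two_le⟩
        rw [hk2, ha] at hxk
        refine hlt.not_ge ?_
        rw [ha]
        exact psi_le_of_two_group ha hG hx hxk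
      · rw [hk3] at hxk
        exact hlt.not_ge (psi_le_of_index_three hmax' hx hxk)

theorem sum_orders_noncyclic_le {G : Type*} [Group G] [Fintype G] (n : ℕ)
    (hn : Fintype.card G = n) (hG : ¬ IsCyclic G) :
    11 * psi G ≤ 7 * psiC n := by
  subst hn
  exact eleven_mul_psi_le hG
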